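/- Assume T is trace-class, μ-a.e. point of X is a Lebesgue point of f, supp μ = X, diam X < ∞, and T has exactly m positive eigenvalues (counted with multiplicity). Then there exists a constant C > 0 such that for all x, y ∈ X: d(x,y) ≤ |M^m(x) - M^m(y)| ≤ C · d(x,y), where M^m : X → ℝ^m, M^m(x) := (√(λⱼ⁺) uⱼ⁺(x))_{j=1,…,m}; i.e. M^m is a bi-Lipschitz embedding of X into ℝ^m. -/

import Mathlib

/-!
The lower bound is a comparison of quadratic forms. For bounded measurable `φ`, the `L²`
expansion of the kernel gives `∬ k_T φ ⊗ φ = lim ∑_{i<n} λᵢ (∫ uᵢ φ)²`, and dropping the negative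
terms bounds this by `∬ K⁺ φ ⊗ φ`, where `K⁺(x,y) = ∑_{λᵢ>0} λᵢ uᵢ(x) uᵢ(y)` is a finite sum
(`integral_form_le`). Hence `G = k_T - K⁺` is a continuous kernel with nonpositive quadratic form.
Testing it against differences of normalized indicators of shrinking balls around `x` and `y`,
which have positive measure, yields `G(x,x) + G(y,y) - G(x,y) - G(y,x) ≤ 0`
(`kernel_diff_nonpos`). As `k_T(x,x) + k_T(y,y) - 2 k_T(x,y) = d(x,y)²`, this is the lower bound.
Working with averages over balls of positive measure bypasses any pointwise (Mercer-type)
convergence of the spectral expansion on the diagonal.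

The upper bound holds because `k_T` is Lipschitz in its first variable uniformly in the second
(`X` being bounded), so that each eigenfunction with nonzero eigenvalue is Lipschitz.
-/

open MeasureTheory Metric Filter Topology

noncomputable section

/-- The MDS kernel `k(x,y) = -(1/2) d(x,y)²`. -/
def mdsK {X : Type*} [MetricSpace X] (x y : X) : ℝ := -(1/2) * dist x y ^ 2

/-- The centered MDS kernel. -/
def mdsKT {X : Type*} [MetricSpace X] [MeasurableSpace X] (μ : Measure X) (x y : X) : ℝ :=
  mdsK x y - (∫ y', mdsK x y' ∂μ) - (∫ x', mdsK x' y ∂μ) + ∫ x', ∫ y', mdsK x' y' ∂μ ∂μ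

/-- `x` is a Lebesgue point of `f`: all balls around `x` have positive measure and the averages
of `f` over `B_r(x)` converge to `f(x)` as `r → 0⁺`. -/
def IsLebPoint {X : Type*} [MetricSpace X] [MeasurableSpace X]
    (μ : Measure X) (f : X → ℝ) (x : X) : Prop :=
  (∀ r > 0, 0 < μ (ball x r)) ∧
  Tendsto (fun r : ℝ => (μ (ball x r)).toReal⁻¹ * ∫ y in ball x r, f y ∂μ)
    (𝓝[>] 0) (𝓝 (f x))

/-- A continuous kernel whose quadratic form is nonpositive on bounded functions is, for a measure
of full support, nonpositive on the discrete signed measure `δ_x - δ_y`. -/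
lemma kernel_diff_nonpos {X : Type*} [MetricSpace X] [SecondCountableTopology X]
    [MeasurableSpace X] [BorelSpace X] (μ : Measure X) [IsProbabilityMeasure μ]
    (hsupp : ∀ (x : X), ∀ r > (0:ℝ), 0 < μ (ball x r))
    (G : X × X → ℝ) (hG : Continuous G) (hGi : Integrable G (μ.prod μ))
    (hneg : ∀ φ : X → ℝ, Measurable φ → (∃ c, ∀ x, |φ x| ≤ c) →
      ∫ p, G p * (φ p.1 * φ p.2) ∂(μ.prod μ) ≤ 0) (x y : X) :
    G (x, x) + G (y, y) - G (x, y) - G (y, x) ≤ 0 := by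
  refine le_of_forall_pos_le_add fun ε hε => ?_
  have hloc : ∀ a b : X, ∃ r > 0, ∀ p ∈ ball a r ×ˢ ball b r, |G p - G (a, b)| < ε / 4 := by
    intro a b
    obtain ⟨r, hr, h⟩ := Metric.continuous_iff.1 hG (a, b) (ε / 4) (by positivity)
    refine ⟨r, hr, fun p hp => ?_⟩
    rw [← Real.dist_eq]
    refine h p ?_
    rw [Prod.dist_eq]
    exact max_lt hp.1 hp.2
  choose R hR hRG using hloc
  -- A single radius on which `G` is `ε/4`-close to its value at each of the four corners.
  obtain ⟨r, hr, h1, h2, h3, h4⟩ : ∃ r > 0, r ≤ R x x ∧ r ≤ R y y ∧ r ≤ R x y ∧ r ≤ R y x :=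
    ⟨min (min (R x x) (R y y)) (min (R x y) (R y x)), by simp [hR], by simp, by simp, by simp,
      by simp⟩
  have hpos : ∀ a : X, 0 < μ.real (ball a r) := fun a =>
    ENNReal.toReal_pos (hsupp a r hr).ne' (measure_ne_top _ _)
  have hmeas : ∀ a b : X, MeasurableSet (ball a r ×ˢ ball b r) := fun a b =>
    measurableSet_ball.prod measurableSet_ball
  have havg : ∀ a b : X, r ≤ R a b →
      |(μ.real (ball a r))⁻¹ * (μ.real (ball b r))⁻¹ *
        (∫ p in ball a r ×ˢ ball b r, G p ∂(μ.prod μ)) - G (a, b)| ≤ ε / 4 := by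
    intro a b hab
    have hm : (μ.prod μ).real (ball a r ×ˢ ball b r) = μ.real (ball a r) * μ.real (ball b r) :=
      measureReal_prod_prod _ _
    have e1 : (∫ p in ball a r ×ˢ ball b r, (G p - G (a, b)) ∂(μ.prod μ)) =
        (∫ p in ball a r ×ˢ ball b r, G p ∂(μ.prod μ)) -
          μ.real (ball a r) * μ.real (ball b r) * G (a, b) := by
      rw [integral_sub hGi.integrableOn (integrable_const _), setIntegral_const, hm, smul_eq_mul]
    have e2 := norm_setIntegral_le_of_norm_le_const (μ := μ.prod μ) (s := ball a r ×ˢ ball b r)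
      (f := fun p => G p - G (a, b)) (C := ε / 4) (measure_lt_top _ _)
      (fun p hp => (hRG a b p ⟨ball_subset_ball hab hp.1, ball_subset_ball hab hp.2⟩).le)
    rw [hm, e1, Real.norm_eq_abs] at e2
    have ha := hpos a
    have hb := hpos b
    have e3 : (μ.real (ball a r))⁻¹ * (μ.real (ball b r))⁻¹ *
        (∫ p in ball a r ×ˢ ball b r, G p ∂(μ.prod μ)) - G (a, b) =
        (μ.real (ball a r) * μ.real (ball b r))⁻¹ *
        ((∫ p in ball a r ×ˢ ball b r, G p ∂(μ.prod μ)) -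
          μ.real (ball a r) * μ.real (ball b r) * G (a, b)) := by
      field_simp
    rw [e3, abs_mul, abs_of_pos (by positivity), inv_mul_le_iff₀ (by positivity)]
    linarith
  set α := (μ.real (ball x r))⁻¹ with hα
  set β := (μ.real (ball y r))⁻¹ with hβ
  have hα0 : 0 < α := inv_pos.2 (hpos x)
  have hβ0 : 0 < β := inv_pos.2 (hpos y)
  have hφ := hneg (fun z => (ball x r).indicator (fun _ => α) z -
      (ball y r).indicator (fun _ => β) z)
    ((measurable_const.indicator measurableSet_ball).sub
      (measurable_const.indicator measurableSet_ball))
    ⟨α + β, fun z => by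
      by_cases hx : z ∈ ball x r <;> by_cases hy : z ∈ ball y r <;>
        simp only [Set.indicator, hx, hy, if_true, if_false] <;> rw [abs_le] <;>
        constructor <;> linarith⟩
  let F : ℝ → X → X → X × X → ℝ := fun c a b p => c * (ball a r ×ˢ ball b r).indicator G p
  have hexp : (fun p : X × X => G p *
      (((ball x r).indicator (fun _ => α) p.1 - (ball y r).indicator (fun _ => β) p.1) *
       ((ball x r).indicator (fun _ => α) p.2 - (ball y r).indicator (fun _ => β) p.2))) =
      F (α * α) x x + F (β * β) y y - F (α * β) x y - F (β * α) y x := by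
    funext p
    by_cases a1 : p.1 ∈ ball x r <;> by_cases a2 : p.1 ∈ ball y r <;>
      by_cases a3 : p.2 ∈ ball x r <;> by_cases a4 : p.2 ∈ ball y r <;>
      simp only [F, Pi.add_apply, Pi.sub_apply, Set.indicator, Set.mem_prod, a1, a2, a3, a4, if_true, if_false, and_self,
        and_true, and_false] <;> ring
  have hi : ∀ (c : ℝ) (a b : X), Integrable (F c a b) (μ.prod μ) := fun c a b =>
    (hGi.indicator (hmeas a b)).const_mul c
  rw [hexp, integral_sub' (((hi _ _ _).add (hi _ _ _)).sub (hi _ _ _)) (hi _ _ _),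
    integral_sub' ((hi _ _ _).add (hi _ _ _)) (hi _ _ _),
    integral_add' (hi _ _ _) (hi _ _ _)] at hφ
  simp only [F, integral_const_mul, integral_indicator (hmeas _ _)] at hφ
  have b1 := abs_le.1 (havg x x h1)
  have b2 := abs_le.1 (havg y y h2)
  have b3 := abs_le.1 (havg x y h3)
  have b4 := abs_le.1 (havg y x h4)
  linarith [b1.1, b1.2, b2.1, b2.2, b3.1, b3.2, b4.1, b4.2]

/-- If `∑ λᵢ uᵢ ⊗ uᵢ` converges to `K` in `L²(μ ⊗ μ)`, then the quadratic form of `K` on bounded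
functions is dominated by that of the sum over the positive `λᵢ`. -/
lemma integral_form_le {X : Type*} [MeasurableSpace X] (μ : Measure X) [IsProbabilityMeasure μ]
    (lam : ℕ → ℝ) (u : ℕ → X → ℝ) (hu : ∀ i, MemLp (u i) 2 μ)
    (K : X × X → ℝ) (hK : MemLp K 2 (μ.prod μ))
    (hbasis : Tendsto
      (fun n => ∫ p, (K p - ∑ i ∈ Finset.range n, lam i * u i p.1 * u i p.2) ^ 2
        ∂(μ.prod μ)) atTop (𝓝 0))
    (hfin : {i : ℕ | 0 < lam i}.Finite)
    (φ : X → ℝ) (hφ : Measurable φ) (c : ℝ) (hc : ∀ x, |φ x| ≤ c) :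
    ∫ p, (K p - ∑ i ∈ hfin.toFinset, lam i * u i p.1 * u i p.2) * (φ p.1 * φ p.2)
      ∂(μ.prod μ) ≤ 0 := by
  have hui : ∀ i, Integrable (u i) μ := fun i => (hu i).integrable (by norm_num)
  have hKi : Integrable K (μ.prod μ) := hK.integrable (by norm_num)
  have hψm : Measurable fun p : X × X => φ p.1 * φ p.2 :=
    (hφ.comp measurable_fst).mul (hφ.comp measurable_snd)
  have hψb : ∀ p : X × X, |φ p.1 * φ p.2| ≤ c ^ 2 := by
    intro p
    rw [abs_mul, sq]
    exact mul_le_mul (hc _) (hc _) (abs_nonneg _) ((abs_nonneg _).trans (hc p.1))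
  have huL : ∀ i, MemLp (fun p : X × X => lam i * u i p.1 * u i p.2) 2 (μ.prod μ) := by
    intro i
    have h1 : AEStronglyMeasurable (fun p : X × X => u i p.1 * u i p.2) (μ.prod μ) :=
      (hui i).1.comp_fst.mul (hui i).1.comp_snd
    have h2 : MemLp (fun p : X × X => u i p.1 * u i p.2) 2 (μ.prod μ) := by
      rw [memLp_two_iff_integrable_sq h1]
      have := (hu i).integrable_sq.mul_prod (hu i).integrable_sq
      refine this.congr (Eventually.of_forall fun p => ?_)
      simp only
      ring
    have := h2.const_mul (lam i)
    simpa only [mul_assoc] using this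
  have hSL : ∀ s : Finset ℕ,
      MemLp (fun p : X × X => ∑ i ∈ s, lam i * u i p.1 * u i p.2) 2 (μ.prod μ) :=
    fun s => memLp_finsetSum s fun i _ => huL i
  have hψi : ∀ h : X × X → ℝ, Integrable h (μ.prod μ) →
      Integrable (fun p => h p * (φ p.1 * φ p.2)) (μ.prod μ) := fun h hh =>
    hh.mul_bdd (c := c ^ 2) hψm.aestronglyMeasurable (Eventually.of_forall hψb)
  have hSint : ∀ s : Finset ℕ,
      ∫ p, (∑ i ∈ s, lam i * u i p.1 * u i p.2) * (φ p.1 * φ p.2) ∂(μ.prod μ) =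
        ∑ i ∈ s, lam i * (∫ x, u i x * φ x ∂μ) ^ 2 := by
    intro s
    simp only [Finset.sum_mul]
    rw [integral_finsetSum _ fun i _ => hψi _ ((huL i).integrable (by norm_num))]
    refine Finset.sum_congr rfl fun i _ => ?_
    rw [sq, ← integral_prod_mul, ← integral_const_mul]
    refine integral_congr_ae (Eventually.of_forall fun p => ?_)
    simp only
    ring
  have hKn : ∀ s : Finset ℕ,
      ∫ p, (K p - ∑ i ∈ s, lam i * u i p.1 * u i p.2) * (φ p.1 * φ p.2) ∂(μ.prod μ) =
        (∫ p, K p * (φ p.1 * φ p.2) ∂(μ.prod μ)) - ∑ i ∈ s, lam i * (∫ x, u i x * φ x ∂μ) ^ 2 := by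
    intro s
    simp only [sub_mul]
    rw [integral_sub (hψi _ hKi) (hψi _ ((hSL s).integrable (by norm_num))), hSint]
  -- Jensen's inequality, in the form of nonnegativity of the variance.
  have hsq : ∀ n, (∫ p, (K p - ∑ i ∈ Finset.range n, lam i * u i p.1 * u i p.2) *
        (φ p.1 * φ p.2) ∂(μ.prod μ)) ^ 2 ≤
      c ^ 4 * ∫ p, (K p - ∑ i ∈ Finset.range n, lam i * u i p.1 * u i p.2) ^ 2 ∂(μ.prod μ) := by
    intro n
    have hL := hK.sub (hSL (Finset.range n))
    have hLi := hψi _ (hL.integrable (by norm_num))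
    set h : X × X → ℝ := fun p => K p - ∑ i ∈ Finset.range n, lam i * u i p.1 * u i p.2 with hh
    have hpt : ∀ p : X × X, (h p * (φ p.1 * φ p.2)) ^ 2 ≤ c ^ 4 * h p ^ 2 := by
      intro p
      have : (φ p.1 * φ p.2) ^ 2 ≤ (c ^ 2) ^ 2 := sq_le_sq' (abs_le.1 (hψb p)).1 (abs_le.1 (hψb p)).2
      nlinarith [sq_nonneg (h p)]
    have hI : Integrable (fun p => c ^ 4 * h p ^ 2) (μ.prod μ) := hL.integrable_sq.const_mul _
    have hI2 : Integrable (fun p => (h p * (φ p.1 * φ p.2)) ^ 2) (μ.prod μ) :=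
      hI.mono' (hLi.1.pow 2) (Eventually.of_forall fun p => by
        rw [Real.norm_eq_abs, abs_of_nonneg (sq_nonneg _)]; exact hpt p)
    have hM : MemLp (fun p => h p * (φ p.1 * φ p.2)) 2 (μ.prod μ) :=
      (memLp_two_iff_integrable_sq hLi.1).2 hI2
    have hv := ProbabilityTheory.variance_nonneg (fun p => h p * (φ p.1 * φ p.2)) (μ.prod μ)
    rw [ProbabilityTheory.variance_eq_sub hM] at hv
    have hle := integral_mono hI2 hI hpt
    rw [integral_const_mul] at hle
    simp only [Pi.pow_apply] at hv
    linarith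
  have hlim : Tendsto (fun n => ∫ p, (K p - ∑ i ∈ Finset.range n, lam i * u i p.1 * u i p.2) *
        (φ p.1 * φ p.2) ∂(μ.prod μ)) atTop (𝓝 0) := by
    have h0 : Tendsto (fun n => (∫ p, (K p - ∑ i ∈ Finset.range n, lam i * u i p.1 * u i p.2) *
        (φ p.1 * φ p.2) ∂(μ.prod μ)) ^ 2) atTop (𝓝 0) :=
      squeeze_zero (fun n => sq_nonneg _) hsq (by simpa using hbasis.const_mul (c ^ 4))
    have h1 := h0.sqrt
    simp only [Real.sqrt_sq_eq_abs, Real.sqrt_zero] at h1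
    exact (tendsto_zero_iff_abs_tendsto_zero _).2 h1
  refine ge_of_tendsto' hlim fun n => ?_
  rw [hKn, hKn]
  refine sub_le_sub_left ?_ _
  calc ∑ i ∈ Finset.range n, lam i * (∫ x, u i x * φ x ∂μ) ^ 2
      ≤ ∑ i ∈ Finset.range n with 0 < lam i, lam i * (∫ x, u i x * φ x ∂μ) ^ 2 := by
        rw [Finset.sum_filter]
        refine Finset.sum_le_sum fun i _ => ?_
        split_ifs with hi
        · exact le_rfl
        · exact mul_nonpos_of_nonpos_of_nonneg (not_lt.1 hi) (sq_nonneg _)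
    _ ≤ ∑ i ∈ hfin.toFinset, lam i * (∫ x, u i x * φ x ∂μ) ^ 2 := by
        refine Finset.sum_le_sum_of_subset_of_nonneg (fun i hi => ?_) fun i hi _ => ?_
        · simpa using (Finset.mem_filter.1 hi).2
        · have : 0 < lam i := by simpa using hi
          positivity

lemma abs_mdsK_sub_le {X : Type*} [MetricSpace X] {D : ℝ} (hD : ∀ x y : X, dist x y ≤ D)
    (x x' y : X) : |mdsK x y - mdsK x' y| ≤ D * dist x x' := by
  have h1 := abs_dist_sub_le x x' y
  have h2 : |dist x y + dist x' y| ≤ 2 * D := by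
    rw [abs_of_nonneg (by positivity)]; linarith [hD x y, hD x' y]
  have h3 : mdsK x y - mdsK x' y =
      -(1/2) * ((dist x y - dist x' y) * (dist x y + dist x' y)) := by
    unfold mdsK; ring
  have h4 := mul_le_mul h1 h2 (abs_nonneg _) dist_nonneg
  rw [h3, abs_mul, abs_mul, abs_neg, abs_of_pos (by norm_num : (0:ℝ) < 1 / 2)]
  linarith

section Bounded

variable {X : Type*} [MetricSpace X] [SecondCountableTopology X]
  [MeasurableSpace X] [BorelSpace X] (μ : Measure X) [IsProbabilityMeasure μ]

lemma integrable_mdsK {D : ℝ} (hD : ∀ x y : X, dist x y ≤ D) (x : X) :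
    Integrable (fun y => mdsK x y) μ := by
  have hc : Continuous fun y => mdsK x y := by unfold mdsK; fun_prop
  refine Integrable.of_bound hc.aestronglyMeasurable (1 / 2 * D ^ 2)
    (Eventually.of_forall fun y => ?_)
  have := pow_le_pow_left₀ dist_nonneg (hD x y) 2
  rw [mdsK, Real.norm_eq_abs, abs_mul, abs_neg, abs_of_pos (by norm_num : (0:ℝ) < 1 / 2),
    abs_of_nonneg (by positivity)]
  linarith

lemma abs_integral_mdsK_sub_le {D : ℝ} (hD : ∀ x y : X, dist x y ≤ D) (x x' : X) :
    |(∫ y, mdsK x y ∂μ) - ∫ y, mdsK x' y ∂μ| ≤ D * dist x x' := by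
  rw [← integral_sub (integrable_mdsK μ hD x) (integrable_mdsK μ hD x')]
  have := norm_integral_le_of_norm_le_const (μ := μ) (f := fun y => mdsK x y - mdsK x' y)
    (C := D * dist x x') (Eventually.of_forall fun y => abs_mdsK_sub_le hD x x' y)
  simpa using this

lemma mdsKT_eq (x y : X) : mdsKT μ x y = mdsK x y - (∫ z, mdsK x z ∂μ) - (∫ z, mdsK y z ∂μ)
    + ∫ x', ∫ y', mdsK x' y' ∂μ ∂μ := by
  have : ∀ z, mdsK z y = mdsK y z := fun z => by simp [mdsK, dist_comm]
  simp only [mdsKT, this]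

lemma abs_mdsKT_sub_le {D : ℝ} (hD : ∀ x y : X, dist x y ≤ D) (x x' y : X) :
    |mdsKT μ x y - mdsKT μ x' y| ≤ 2 * D * dist x x' := by
  have h1 := abs_le.1 (abs_mdsK_sub_le hD x x' y)
  have h2 := abs_le.1 (abs_integral_mdsK_sub_le μ hD x x')
  rw [mdsKT_eq, mdsKT_eq, abs_le]
  constructor <;> linarith [h1.1, h1.2, h2.1, h2.2]

lemma continuous_mdsKT {D : ℝ} (hD : ∀ x y : X, dist x y ≤ D) :
    Continuous fun p : X × X => mdsKT μ p.1 p.2 := by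
  have hh : Continuous fun x => ∫ z, mdsK x z ∂μ := by
    refine (LipschitzWith.of_dist_le_mul (K := D.toNNReal) fun x x' => ?_).continuous
    rw [Real.dist_eq]
    exact (abs_integral_mdsK_sub_le μ hD x x').trans
      (mul_le_mul_of_nonneg_right (Real.le_coe_toNNReal D) dist_nonneg)
  have hk : Continuous fun p : X × X => mdsK p.1 p.2 := by unfold mdsK; fun_prop
  simp only [mdsKT_eq]
  exact ((hk.sub (hh.comp continuous_fst)).sub (hh.comp continuous_snd)).add continuous_const

lemma bounded_mdsKT {D : ℝ} (hD : ∀ x y : X, dist x y ≤ D) :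
    ∃ B, ∀ x y : X, |mdsKT μ x y| ≤ B := by
  obtain ⟨z⟩ : Nonempty X := μ.nonempty_of_neZero
  have hD0 : 0 ≤ D := dist_nonneg.trans (hD z z)
  refine ⟨|mdsKT μ z z| + 2 * (2 * D * D), fun x y => ?_⟩
  have hsymm : ∀ a b, mdsKT μ a b = mdsKT μ b a := fun a b => by
    rw [mdsKT_eq, mdsKT_eq, mdsK, mdsK, dist_comm]; ring
  have h1 := abs_mdsKT_sub_le μ hD x z y
  have h2 := abs_mdsKT_sub_le μ hD y z z
  rw [hsymm z y] at h1
  have h3 := mul_le_mul_of_nonneg_left (hD x z) (by positivity : 0 ≤ 2 * D)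
  have h4 := mul_le_mul_of_nonneg_left (hD y z) (by positivity : 0 ≤ 2 * D)
  calc |mdsKT μ x y| = |(mdsKT μ x y - mdsKT μ y z) + (mdsKT μ y z - mdsKT μ z z)
        + mdsKT μ z z| := by congr 1; ring
    _ ≤ |mdsKT μ x y - mdsKT μ y z| + |mdsKT μ y z - mdsKT μ z z| + |mdsKT μ z z| :=
        abs_add_three _ _ _
    _ ≤ _ := by linarith

/-- Eigenfunctions of `T` for nonzero eigenvalues are Lipschitz. -/
lemma eigenfunction_lipschitz {D : ℝ} (hD : ∀ x y : X, dist x y ≤ D) {l : ℝ} (hl : l ≠ 0)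
    {v : X → ℝ} (hv : Integrable v μ) (heig : ∀ x, l * v x = ∫ y, mdsKT μ x y * v y ∂μ) :
    ∃ L, 0 ≤ L ∧ ∀ x y, |v x - v y| ≤ L * dist x y := by
  obtain ⟨z⟩ : Nonempty X := μ.nonempty_of_neZero
  have hD0 : 0 ≤ D := dist_nonneg.trans (hD z z)
  obtain ⟨B, hB⟩ := bounded_mdsKT μ hD
  have hi : ∀ x, Integrable (fun y => mdsKT μ x y * v y) μ := fun x =>
    hv.bdd_mul (c := B)
      ((continuous_mdsKT μ hD).comp (Continuous.prodMk_right x)).aestronglyMeasurable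
      (Eventually.of_forall fun y => hB x y)
  refine ⟨|l|⁻¹ * (2 * D * ∫ y, |v y| ∂μ),
    mul_nonneg (by positivity) (mul_nonneg (by positivity)
      (integral_nonneg fun _ => abs_nonneg _)), fun x y => ?_⟩
  have h1 : |l| * |v x - v y| ≤ 2 * D * dist x y * ∫ w, |v w| ∂μ := by
    rw [← abs_mul, mul_sub, heig x, heig y, ← integral_sub (hi x) (hi y), ← integral_const_mul]
    rw [← Real.norm_eq_abs]
    refine norm_integral_le_of_norm_le (hv.abs.const_mul _) (Eventually.of_forall fun w => ?_)
    rw [← sub_mul, norm_mul]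
    exact mul_le_mul_of_nonneg_right (abs_mdsKT_sub_le μ hD x y w) (abs_nonneg _)
  have hl' : 0 < |l| := abs_pos.2 hl
  rw [mul_assoc, le_inv_mul_iff₀ hl']
  linarith

end Bounded

/-- Remark 4.5 (bi-Lipschitz case): under trace-class and a.e. Lebesgue point assumptions,
if `μ` has full support, `diam X < ∞` and `T` has exactly `m` positive eigenvalues (with
multiplicity), then the truncated MDS map `M^m : X → ℝ^m`, `M^m(x) = (√λⱼ⁺ uⱼ⁺(x))_{j≤m}`,
is bi-Lipschitz: `d(x,y) ≤ |M^m(x) - M^m(y)| ≤ C d(x,y)`. -/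
theorem mds_map_biLipschitz
    {X : Type*} [MetricSpace X] [CompleteSpace X] [SecondCountableTopology X]
    [MeasurableSpace X] [BorelSpace X]
    (μ : Measure X) [IsProbabilityMeasure μ]
    (hmom : ∃ z : X, Integrable (fun y => dist z y ^ 4) μ)
    (lam : ℕ → ℝ) (u : ℕ → X → ℝ)
    (hmeas : ∀ i, Measurable (u i))
    (heig : ∀ i, lam i ≠ 0 → ∀ x, lam i * u i x = ∫ y, mdsKT μ x y * u i y ∂μ)
    (horth : ∀ i j, (∫ x, u i x * u j x ∂μ) = if i = j then 1 else 0)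
    (htrace : Summable fun i => |lam i|)
    (hbasis : Tendsto
      (fun n => ∫ p, (mdsKT μ p.1 p.2 - ∑ i ∈ Finset.range n, lam i * u i p.1 * u i p.2) ^ 2
        ∂(μ.prod μ)) atTop (𝓝 0))
    (f : X → ℝ) (hf : f = fun x => ∑' i, |lam i| * (u i x) ^ 2)
    (hfint : Integrable f μ)
    (hleb : ∀ᵐ x ∂μ, IsLebPoint μ f x)
    (hsupp : ∀ (x : X), ∀ r > (0:ℝ), 0 < μ (ball x r))
    (hdiam : EMetric.diam (Set.univ : Set X) < ⊤)
    (m : ℕ) (hfin : {i : ℕ | 0 < lam i}.Finite) (hcard : Set.ncard {i : ℕ | 0 < lam i} = m) :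
    ∃ C > (0:ℝ), ∀ e : Fin m → ℕ, Function.Injective e → {i : ℕ | 0 < lam i} = Set.range e →
      ∀ x y : X,
        dist x y ≤ Real.sqrt (∑ j : Fin m, lam (e j) * (u (e j) x - u (e j) y) ^ 2) ∧
        Real.sqrt (∑ j : Fin m, lam (e j) * (u (e j) x - u (e j) y) ^ 2) ≤ C * dist x y := by
  have hD : ∀ x y : X, dist x y ≤ Metric.diam (Set.univ : Set X) := fun x y =>
    Metric.dist_le_diam_of_mem' hdiam.ne (Set.mem_univ x) (Set.mem_univ y)
  -- `∫ uᵢ² = 1 ≠ 0` rules out the junk value of the integral, so `uᵢ` is square integrable.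
  have hu : ∀ i, MemLp (u i) 2 μ := by
    intro i
    rw [memLp_two_iff_integrable_sq (hmeas i).aestronglyMeasurable]
    have h1 : Integrable (fun x => u i x * u i x) μ := by
      refine Integrable.of_integral_ne_zero ?_
      rw [horth i i]
      simp
    simpa only [sq] using h1
  have hui : ∀ i, Integrable (u i) μ := fun i => (hu i).integrable (by norm_num)
  have hlip : ∀ i, ∃ L, 0 ≤ L ∧ (lam i ≠ 0 → ∀ x y, |u i x - u i y| ≤ L * dist x y) := by
    intro i
    by_cases hl : lam i = 0
    · exact ⟨0, le_rfl, fun h => absurd hl h⟩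
    · obtain ⟨L, h0, hL⟩ := eigenfunction_lipschitz μ hD hl (hui i) (heig i hl)
      exact ⟨L, h0, fun _ => hL⟩
  choose L hL0 hL using hlip
  have hmem : ∀ i ∈ hfin.toFinset, 0 < lam i := fun i hi => by simpa using hi
  have hcont : ∀ i ∈ hfin.toFinset, Continuous (u i) := fun i hi =>
    (LipschitzWith.of_dist_le_mul (K := (L i).toNNReal) fun x y => by
      rw [Real.dist_eq, Real.coe_toNNReal _ (hL0 i)]
      exact hL i (hmem i hi).ne' x y).continuous
  obtain ⟨B, hB⟩ := bounded_mdsKT μ hD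
  have hKL : MemLp (fun p : X × X => mdsKT μ p.1 p.2) 2 (μ.prod μ) :=
    MemLp.of_bound (continuous_mdsKT μ hD).aestronglyMeasurable B
      (Eventually.of_forall fun p => hB _ _)
  have hlow : ∀ x y : X,
      dist x y ^ 2 ≤ ∑ i ∈ hfin.toFinset, lam i * (u i x - u i y) ^ 2 := by
    intro x y
    have hG := kernel_diff_nonpos μ hsupp
      (fun p => mdsKT μ p.1 p.2 - ∑ i ∈ hfin.toFinset, lam i * u i p.1 * u i p.2)
      ((continuous_mdsKT μ hD).sub (continuous_finsetSum _ fun i hi =>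
        (continuous_const.mul ((hcont i hi).comp continuous_fst)).mul
          ((hcont i hi).comp continuous_snd)))
      ((hKL.integrable (by norm_num)).sub (integrable_finsetSum _ fun i _ => by
        simpa only [mul_assoc] using ((hui i).mul_prod (hui i)).const_mul (lam i)))
      (fun φ hφ ⟨c, hc⟩ => integral_form_le μ lam u hu _ hKL hbasis hfin φ hφ c hc) x y
    have hd : mdsKT μ x x + mdsKT μ y y - mdsKT μ x y - mdsKT μ y x = dist x y ^ 2 := by
      simp only [mdsKT_eq, mdsK, dist_self, dist_comm y x]
      ring
    have hs : ∑ i ∈ hfin.toFinset, lam i * (u i x - u i y) ^ 2 =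
        ∑ i ∈ hfin.toFinset, lam i * u i x * u i x + ∑ i ∈ hfin.toFinset, lam i * u i y * u i y
        - ∑ i ∈ hfin.toFinset, lam i * u i x * u i y
        - ∑ i ∈ hfin.toFinset, lam i * u i y * u i x := by
      rw [← Finset.sum_add_distrib, ← Finset.sum_sub_distrib, ← Finset.sum_sub_distrib]
      exact Finset.sum_congr rfl fun i _ => by ring
    simp only at hG
    linarith
  set A := ∑ i ∈ hfin.toFinset, lam i * L i ^ 2 with hA
  have hup : ∀ x y : X,
      ∑ i ∈ hfin.toFinset, lam i * (u i x - u i y) ^ 2 ≤ A * dist x y ^ 2 := by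
    intro x y
    rw [hA, Finset.sum_mul]
    refine Finset.sum_le_sum fun i hi => ?_
    have h1 := hL i (hmem i hi).ne' x y
    have h2 : (u i x - u i y) ^ 2 ≤ (L i * dist x y) ^ 2 :=
      sq_le_sq' (abs_le.1 h1).1 (abs_le.1 h1).2
    calc lam i * (u i x - u i y) ^ 2 ≤ lam i * (L i * dist x y) ^ 2 :=
          mul_le_mul_of_nonneg_left h2 (hmem i hi).le
      _ = lam i * L i ^ 2 * dist x y ^ 2 := by ring
  have hA0 : 0 ≤ A := Finset.sum_nonneg fun i hi => mul_nonneg (hmem i hi).le (sq_nonneg _)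
  -- Adding `1` keeps the constant positive when there are no positive eigenvalues.
  refine ⟨Real.sqrt A + 1, by positivity, fun e he hr x y => ?_⟩
  have hsum : ∑ j : Fin m, lam (e j) * (u (e j) x - u (e j) y) ^ 2 =
      ∑ i ∈ hfin.toFinset, lam i * (u i x - u i y) ^ 2 := by
    have : hfin.toFinset = Finset.univ.image e := by
      ext i
      simp [hr]
    rw [this, Finset.sum_image fun a _ b _ h => he h]
  rw [hsum]
  refine ⟨Real.le_sqrt_of_sq_le (hlow x y), ?_⟩
  calc Real.sqrt (∑ i ∈ hfin.toFinset, lam i * (u i x - u i y) ^ 2)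
      ≤ Real.sqrt (A * dist x y ^ 2) := Real.sqrt_le_sqrt (hup x y)
    _ = Real.sqrt A * dist x y := by rw [Real.sqrt_mul hA0, Real.sqrt_sq dist_nonneg]
    _ ≤ (Real.sqrt A + 1) * dist x y := by
        nlinarith [dist_nonneg (x := x) (y := y)]
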